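/- arXiv:1011.0551 — 3 statements merged into one kernel-verified Lean document; each statement's English description precedes it below -/
import Mathlib

section
/- Let 𝔓 = (D, Σ, Σi, G, R, d0, m0) be an asynchronous program with G in normal form, let c = (d1, a, d2) ∈ D × Σ × D be a context, and let N_c be the widget Petri net built from the initialized CFG G^c. Then for every multiset m over Σ: (d1, {a}) →a (d2, m) if and only if there exists a finite sequence w of transitions of N_c with {(begin, c)} →w {(end, c)} ⊕ m. -/
/-!
The widget carries out derivations of `G^c` in which the number of pending variables is bounded:
the budget place and the variable places together hold `k + 1` tokens from `t_i` until `t_e`.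
So a completed run of the widget is a derivation read up to the order of letters, and a derivation
tree can be recovered from it (`forest_of_fireSeq`).

Conversely, a derivation tree whose variables form the set `V` has a Parikh-equivalent derivation
that needs only `|V|` budget tokens (`runs_of_tree`). Let the root production be `X → B C`,
with subtrees `t₁` and `t₂`. If one of them omits a variable of `V`, it is processed first with
`|V| - 1` tokens, and then the other with `|V|` tokens. Otherwise both use all of `V`.
If no path of `t₂` repeats a variable, then `t₂` has height at most `|V|` and `|V| - 1` tokens
are enough for it, so it goes first (`found_or_pump_or_short`). If a path does repeat a
variable `Z`, the segment between the two occurrences is cut out of `t₂` and spliced into `t₁` at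
an occurrence of `Z`. This changes neither the Parikh image nor the total size, and it makes `t₂`
smaller, so an induction on the pair (size of the tree, size of `t₂`) terminates.

The remaining part is the triple construction: trees of `G^R` rooted at `[d X d']` correspond to
trees of `G` rooted at `X` whose yield labels a path of `R` from `d` to `d'`.
-/
/-- A context-free grammar given by a set of productions. -/
structure CFG' (T N : Type) where
  P : Set (N × List (Symbol T N))

namespace CFG'

variable {T N : Type}

/-- One-step derivation relation of a grammar. -/
inductive Step (G : CFG' T N) : List (Symbol T N) → List (Symbol T N) → Prop
  | step {A : N} {w : List (Symbol T N)} (y z : List (Symbol T N)) :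
      (A, w) ∈ G.P → Step G (y ++ [Symbol.nonterminal A] ++ z) (y ++ w ++ z)

/-- Reflexive-transitive closure of the one-step derivation relation. -/
def Derives (G : CFG' T N) : List (Symbol T N) → List (Symbol T N) → Prop :=
  Relation.ReflTransGen G.Step

/-- Every production lies in `X × (XX ∪ Γ ∪ {ε})`. -/
def NormalForm (G : CFG' T N) : Prop :=
  ∀ p ∈ G.P,
    (∃ B C : N, p.2 = [Symbol.nonterminal B, Symbol.nonterminal C]) ∨
    (∃ a : T, p.2 = [Symbol.terminal a]) ∨ p.2 = []

/-- Every production lies in `X × ((Γ·X) ∪ {ε})`. -/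
def RegularForm (G : CFG' T N) : Prop :=
  ∀ p ∈ G.P,
    (∃ (a : T) (B : N), p.2 = [Symbol.terminal a, Symbol.nonterminal B]) ∨ p.2 = []

end CFG'
/-- The projected product grammar `G^R` over `Σ` of a normal-form CFG `G` over `Σ ∪ Σi`
and a regular grammar `R` over `Σ ∪ Σi`.  A terminal `Sum.inl σ` is a symbol of `Σ`
and `Sum.inr τ` a symbol of `Σi`; the right-hand side `Proj_Σ(a)` of the second kind
of production keeps `a` exactly when it lies in `Σ`. -/
def projProductGrammar {Sg Si N D : Type} (G : CFG' (Sg ⊕ Si) N) (R : CFG' (Sg ⊕ Si) D) :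
    CFG' Sg (D × N × D) where
  P := { p |
    (∃ (A : N) (d : D),
      (A, ([] : List (Symbol (Sg ⊕ Si) N))) ∈ G.P ∧ p = ((d, A, d), [])) ∨
    (∃ (A : N) (a : Sg ⊕ Si) (d d' : D),
      (A, [Symbol.terminal a]) ∈ G.P ∧
      (d, [Symbol.terminal a, Symbol.nonterminal d']) ∈ R.P ∧
      p = ((d, A, d'), (a.getLeft?).toList.map Symbol.terminal)) ∨
    (∃ (A B C : N) (d0 d1 d2 : D),
      (A, [Symbol.nonterminal B, Symbol.nonterminal C]) ∈ G.P ∧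
      p = ((d0, A, d2),
        [Symbol.nonterminal (d0, B, d1), Symbol.nonterminal (d1, C, d2)])) }
/-- An asynchronous program: a CFG `G` over `Σ ⊕ Σi` (posts and internal actions) with a
handler variable `X σ` for each handler name `σ`, a regular grammar `R` over `Σ ⊕ Σi`
modelling the global-state changes, an initial state `d0` and an initial multiset `m0`
of pending handler instances. -/
structure AsyncProgram (D Sg Si N : Type) where
  G : CFG' (Sg ⊕ Si) N
  R : CFG' (Sg ⊕ Si) D
  X : Sg → N
  d0 : D
  m0 : Multiset Sg

/-- The transition relation of an asynchronous program:
`(d, m ⊕ {σ}) →σ (d', m ⊕ Parikh(Proj_Σ(w)))` whenever `d ⇒*_R w·d'` and `X_σ ⇒*_G w`. -/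
def AsyncProgram.Trans {D Sg Si N : Type} (P : AsyncProgram D Sg Si N) (σ : Sg)
    (c c' : D × Multiset Sg) : Prop :=
  ∃ (m : Multiset Sg) (w : List (Sg ⊕ Si)),
    c.2 = m + {σ} ∧
    c'.2 = m + ↑(w.filterMap Sum.getLeft?) ∧
    P.R.Derives [Symbol.nonterminal c.1]
      (w.map Symbol.terminal ++ [Symbol.nonterminal c'.1]) ∧
    P.G.Derives [Symbol.nonterminal (P.X σ)] (w.map Symbol.terminal)
/-- A Petri net on places `S` and transitions `T`: input and output multisets. -/
structure PetriNet (S T : Type) where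
  I : T → Multiset S
  O : T → Multiset S

namespace PetriNet

variable {S T : Type}

/-- `t` is enabled at `m` and firing it yields `m'`. -/
def Fire (N : PetriNet S T) (t : T) (m m' : Multiset S) : Prop :=
  N.I t ≤ m ∧ m' + N.I t = m + N.O t

/-- Firing a finite sequence of transitions. -/
inductive FireSeq (N : PetriNet S T) : List T → Multiset S → Multiset S → Prop
  | nil (m : Multiset S) : FireSeq N [] m m
  | cons {t : T} {w : List T} {m m1 m' : Multiset S} :
      N.Fire t m m1 → FireSeq N w m1 m' → FireSeq N (t :: w) m m'

/-- `m` is reachable from `m0`. -/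
def Reach (N : PetriNet S T) (m0 m : Multiset S) : Prop :=
  ∃ w : List T, N.FireSeq w m0 m

/-- `m` is coverable from `m0`. -/
def Coverable (N : PetriNet S T) (m0 m : Multiset S) : Prop :=
  ∃ m' : Multiset S, N.Reach m0 m' ∧ m ≤ m'

/-- The initialized net `(N, m0)` is bounded: finitely many reachable markings. -/
def Bounded (N : PetriNet S T) (m0 : Multiset S) : Prop :=
  {m : Multiset S | N.Reach m0 m}.Finite

end PetriNet

/-- A marking is Boolean iff every multiplicity is at most one. -/
def BooleanMarking {S : Type} (m : Multiset S) : Prop := m.Nodup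

/-- An initialized Petri net is Boolean iff the initial marking and all the `I(t)`, `O(t)`
are Boolean. -/
def BooleanNet {S T : Type} (N : PetriNet S T) (m0 : Multiset S) : Prop :=
  BooleanMarking m0 ∧ ∀ t : T, BooleanMarking (N.I t) ∧ BooleanMarking (N.O t)
/-- Places of a widget: `begin`, `end`, the variables `Y`, the budget place `$`,
and the letters `Σ`. -/
inductive WPlace (Y A : Type)
  | wbegin : WPlace Y A
  | wend : WPlace Y A
  | wvar (y : Y) : WPlace Y A
  | wdollar : WPlace Y A
  | wletter (a : A) : WPlace Y A

/-- Transitions of a widget: `t_i`, `t_e`, and the productions. -/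
inductive WTrans (P : Type)
  | winit : WTrans P
  | wexit : WTrans P
  | wprod (p : P) : WTrans P

/-- Interpret a grammar symbol as a widget place. -/
def symWPlace {Y A : Type} : Symbol A Y → WPlace Y A
  | Symbol.terminal a => WPlace.wletter a
  | Symbol.nonterminal y => WPlace.wvar y

/-- The widget `N_H` of an initialized normal-form CFG `H` with `k` variables. -/
def widget {A Y : Type} (H : CFG' A Y) (S0 : Y) (k : ℕ) :
    PetriNet (WPlace Y A) (WTrans {p // p ∈ H.P}) where
  I t :=
    match t with
    | WTrans.winit => {WPlace.wbegin}
    | WTrans.wexit => Multiset.replicate (k + 1) WPlace.wdollar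
    | WTrans.wprod p =>
      match p.1.2 with
      | [Symbol.nonterminal _, Symbol.nonterminal _] =>
          {WPlace.wvar p.1.1, WPlace.wdollar}
      | _ => {WPlace.wvar p.1.1}
  O t :=
    match t with
    | WTrans.winit => {WPlace.wvar S0} + Multiset.replicate k WPlace.wdollar
    | WTrans.wexit => {WPlace.wend}
    | WTrans.wprod p =>
      match p.1.2 with
      | [Symbol.nonterminal B, Symbol.nonterminal C] =>
          {WPlace.wvar B, WPlace.wvar C}
      | α => (α.map symWPlace : Multiset (WPlace Y A)) + {WPlace.wdollar}


/-! ### Derivation trees and contexts -/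

/-- `PTree H X V m n`: the grammar `H` has a derivation tree with root `X`, whose set of variables
is exactly `V`, whose yield has Parikh image `m`, and which has `n` variable nodes. -/
inductive PTree {A Y : Type} [DecidableEq Y] (H : CFG' A Y) :
    Y → Finset Y → Multiset A → ℕ → Prop
  | leaf {X : Y} {u : List A} : (X, u.map Symbol.terminal) ∈ H.P → PTree H X {X} (u : Multiset A) 1
  | node {X B C : Y} {V₁ V₂ : Finset Y} {m₁ m₂ : Multiset A} {n₁ n₂ : ℕ} :
      (X, [Symbol.nonterminal B, Symbol.nonterminal C]) ∈ H.P →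
      PTree H B V₁ m₁ n₁ → PTree H C V₂ m₂ n₂ →
      PTree H X (insert X (V₁ ∪ V₂)) (m₁ + m₂) (n₁ + n₂ + 1)

/-- `PCtx H X Z V m n`: a derivation tree of `H` with root `X` in which one subtree with root `Z`
has been replaced by a hole. The hole contributes nothing to the variables `V`, the Parikh image
`m` of the yield, or the number of nodes `n`. -/
inductive PCtx {A Y : Type} [DecidableEq Y] (H : CFG' A Y) :
    Y → Y → Finset Y → Multiset A → ℕ → Prop
  | hole (X : Y) : PCtx H X X ∅ 0 0
  | left {X B C Z : Y} {V₁ V₂ : Finset Y} {m₁ m₂ : Multiset A} {n₁ n₂ : ℕ} :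
      (X, [Symbol.nonterminal B, Symbol.nonterminal C]) ∈ H.P →
      PCtx H B Z V₁ m₁ n₁ → PTree H C V₂ m₂ n₂ →
      PCtx H X Z (insert X (V₁ ∪ V₂)) (m₁ + m₂) (n₁ + n₂ + 1)
  | right {X B C Z : Y} {V₁ V₂ : Finset Y} {m₁ m₂ : Multiset A} {n₁ n₂ : ℕ} :
      (X, [Symbol.nonterminal B, Symbol.nonterminal C]) ∈ H.P →
      PTree H B V₁ m₁ n₁ → PCtx H C Z V₂ m₂ n₂ →
      PCtx H X Z (insert X (V₁ ∪ V₂)) (m₁ + m₂) (n₁ + n₂ + 1)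

section Trees

variable {A Y : Type} [DecidableEq Y] {H : CFG' A Y}

theorem PTree.root_mem {X : Y} {V : Finset Y} {m : Multiset A} {n : ℕ}
    (h : PTree H X V m n) : X ∈ V := by
  cases h <;> simp

theorem PCtx.plug {X Z : Y} {V V' : Finset Y} {m m' : Multiset A} {n n' : ℕ}
    (h : PCtx H X Z V m n) (t : PTree H Z V' m' n') :
    PTree H X (V ∪ V') (m + m') (n + n') := by
  induction h with
  | hole X => simpa using t
  | left hp _ t₂ ih =>
    convert PTree.node hp (ih t) t₂ using 1
    · ext; simp only [Finset.mem_insert, Finset.mem_union]; tauto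
    · abel
    · omega
  | right hp t₁ _ ih =>
    convert PTree.node hp t₁ (ih t) using 1
    · ext; simp only [Finset.mem_insert, Finset.mem_union]; tauto
    · abel
    · omega

/-- A tree splits at a node labelled `Z` into a context and a subtree. -/
def SplitsAt (H : CFG' A Y) (X Z : Y) (V : Finset Y) (m : Multiset A) (n : ℕ) : Prop :=
  ∃ V₁ V₂ m₁ m₂ n₁ n₂, PCtx H X Z V₁ m₁ n₁ ∧ PTree H Z V₂ m₂ n₂ ∧
    V = V₁ ∪ V₂ ∧ m = m₁ + m₂ ∧ n = n₁ + n₂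

theorem SplitsAt.left {X B C Z : Y} {V₁ V₂ : Finset Y} {m₁ m₂ : Multiset A} {n₁ n₂ : ℕ}
    (hp : (X, [Symbol.nonterminal B, Symbol.nonterminal C]) ∈ H.P)
    (h : SplitsAt H B Z V₁ m₁ n₁) (t : PTree H C V₂ m₂ n₂) :
    SplitsAt H X Z (insert X (V₁ ∪ V₂)) (m₁ + m₂) (n₁ + n₂ + 1) := by
  obtain ⟨Va, Vb, ma, mb, na, nb, hc, ht, rfl, rfl, rfl⟩ := h
  refine ⟨_, _, _, _, _, _, PCtx.left hp hc t, ht, ?_, ?_, ?_⟩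
  · ext; simp only [Finset.mem_insert, Finset.mem_union]; tauto
  · abel
  · omega

theorem SplitsAt.right {X B C Z : Y} {V₁ V₂ : Finset Y} {m₁ m₂ : Multiset A} {n₁ n₂ : ℕ}
    (hp : (X, [Symbol.nonterminal B, Symbol.nonterminal C]) ∈ H.P)
    (t : PTree H B V₁ m₁ n₁) (h : SplitsAt H C Z V₂ m₂ n₂) :
    SplitsAt H X Z (insert X (V₁ ∪ V₂)) (m₁ + m₂) (n₁ + n₂ + 1) := by
  obtain ⟨Va, Vb, ma, mb, na, nb, hc, ht, rfl, rfl, rfl⟩ := h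
  refine ⟨_, _, _, _, _, _, PCtx.right hp t hc, ht, ?_, ?_, ?_⟩
  · ext; simp only [Finset.mem_insert, Finset.mem_union]; tauto
  · abel
  · omega

theorem PTree.splitsAt_root {X : Y} {V : Finset Y} {m : Multiset A} {n : ℕ}
    (h : PTree H X V m n) : SplitsAt H X X V m n :=
  ⟨_, _, _, _, _, _, PCtx.hole X, h, by simp, by simp, by simp⟩

theorem PTree.splitsAt {X Z : Y} {V : Finset Y} {m : Multiset A} {n : ℕ}
    (h : PTree H X V m n) (hZ : Z ∈ V) : SplitsAt H X Z V m n := by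
  induction h with
  | leaf hp =>
    obtain rfl := Finset.mem_singleton.1 hZ
    exact (PTree.leaf hp).splitsAt_root
  | node hp t₁ t₂ ih₁ ih₂ =>
    rcases Finset.mem_insert.1 hZ with rfl | hZ
    · exact (PTree.node hp t₁ t₂).splitsAt_root
    · rcases Finset.mem_union.1 hZ with hZ | hZ
      · exact (ih₁ hZ).left hp t₂
      · exact SplitsAt.right hp t₁ (ih₂ hZ)

/-- A tree has a pump if a nonempty context from some `Z` to `Z` can be cut out of it. Only what
is left after the cut is recorded, not the place of the cut. -/
def HasPump (H : CFG' A Y) (X : Y) (V : Finset Y) (m : Multiset A) (n : ℕ) : Prop :=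
  ∃ Z V₁ V₂ m₁ m₂ n₁ n₂, PCtx H Z Z V₁ m₁ n₁ ∧ 0 < n₁ ∧ PTree H X V₂ m₂ n₂ ∧ Z ∈ V₂ ∧
    V = V₁ ∪ V₂ ∧ m = m₁ + m₂ ∧ n = n₁ + n₂

theorem HasPump.left {X B C : Y} {V₁ V₂ : Finset Y} {m₁ m₂ : Multiset A} {n₁ n₂ : ℕ}
    (hp : (X, [Symbol.nonterminal B, Symbol.nonterminal C]) ∈ H.P)
    (h : HasPump H B V₁ m₁ n₁) (t : PTree H C V₂ m₂ n₂) :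
    HasPump H X (insert X (V₁ ∪ V₂)) (m₁ + m₂) (n₁ + n₂ + 1) := by
  obtain ⟨Z, Va, Vb, ma, mb, na, nb, hc, hna, ht, hZ, rfl, rfl, rfl⟩ := h
  refine ⟨Z, _, _, _, _, _, _, hc, hna, PTree.node hp ht t, ?_, ?_, ?_, ?_⟩
  · simp [hZ]
  · ext; simp only [Finset.mem_insert, Finset.mem_union]; tauto
  · abel
  · omega

theorem HasPump.right {X B C : Y} {V₁ V₂ : Finset Y} {m₁ m₂ : Multiset A} {n₁ n₂ : ℕ}
    (hp : (X, [Symbol.nonterminal B, Symbol.nonterminal C]) ∈ H.P)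
    (t : PTree H B V₁ m₁ n₁) (h : HasPump H C V₂ m₂ n₂) :
    HasPump H X (insert X (V₁ ∪ V₂)) (m₁ + m₂) (n₁ + n₂ + 1) := by
  obtain ⟨Z, Va, Vb, ma, mb, na, nb, hc, hna, ht, hZ, rfl, rfl, rfl⟩ := h
  refine ⟨Z, _, _, _, _, _, _, hc, hna, PTree.node hp t ht, ?_, ?_, ?_, ?_⟩
  · simp [hZ]
  · ext; simp only [Finset.mem_insert, Finset.mem_union]; tauto
  · abel
  · omega

/-- If the root variable of a tree occurs again inside the left subtree, the whole segment
between the two occurrences is a pump. -/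
theorem SplitsAt.hasPump_left {X B C : Y} {V₁ V₂ : Finset Y} {m₁ m₂ : Multiset A} {n₁ n₂ : ℕ}
    (hp : (X, [Symbol.nonterminal B, Symbol.nonterminal C]) ∈ H.P)
    (h : SplitsAt H B X V₁ m₁ n₁) (t : PTree H C V₂ m₂ n₂) :
    HasPump H X (insert X (V₁ ∪ V₂)) (m₁ + m₂) (n₁ + n₂ + 1) := by
  obtain ⟨Va, Vb, ma, mb, na, nb, hc, ht, rfl, rfl, rfl⟩ := h
  refine ⟨X, _, _, _, _, _, _, PCtx.left hp hc t, by omega, ht, ht.root_mem, ?_, ?_, ?_⟩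
  · ext; simp only [Finset.mem_insert, Finset.mem_union]; tauto
  · abel
  · omega

theorem SplitsAt.hasPump_right {X B C : Y} {V₁ V₂ : Finset Y} {m₁ m₂ : Multiset A} {n₁ n₂ : ℕ}
    (hp : (X, [Symbol.nonterminal B, Symbol.nonterminal C]) ∈ H.P)
    (t : PTree H B V₁ m₁ n₁) (h : SplitsAt H C X V₂ m₂ n₂) :
    HasPump H X (insert X (V₁ ∪ V₂)) (m₁ + m₂) (n₁ + n₂ + 1) := by
  obtain ⟨Va, Vb, ma, mb, na, nb, hc, ht, rfl, rfl, rfl⟩ := h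
  refine ⟨X, _, _, _, _, _, _, PCtx.right hp t hc, by omega, ht, ht.root_mem, ?_, ?_, ?_⟩
  · ext; simp only [Finset.mem_insert, Finset.mem_union]; tauto
  · abel
  · omega

end Trees

/-! ### Firing the widget along a tree -/

section Runs

theorem PetriNet.FireSeq.append {S T : Type} {N : PetriNet S T} {w w' : List T}
    {m₁ m₂ m₃ : Multiset S} (h : N.FireSeq w m₁ m₂) (h' : N.FireSeq w' m₂ m₃) :
    N.FireSeq (w ++ w') m₁ m₃ := by
  induction h with
  | nil => exact h'
  | cons hf _ ih => exact .cons hf (ih h')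

theorem PetriNet.Reach.trans {S T : Type} {N : PetriNet S T} {m₁ m₂ m₃ : Multiset S}
    (h : N.Reach m₁ m₂) (h' : N.Reach m₂ m₃) : N.Reach m₁ m₃ := by
  obtain ⟨w, h⟩ := h
  obtain ⟨w', h'⟩ := h'
  exact ⟨_, h.append h'⟩

theorem PetriNet.reach_of_fire {S T : Type} {N : PetriNet S T} (t : T) (F : Multiset S) :
    N.Reach (N.I t + F) (N.O t + F) :=
  ⟨[t], .cons ⟨Multiset.le_add_right _ _, by abel⟩ (.nil _)⟩

variable {A Y : Type} {H : CFG' A Y} {S0 : Y} {K : ℕ}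

theorem widget_I_node {X B C : Y}
    (hp : (X, [Symbol.nonterminal B, Symbol.nonterminal C]) ∈ H.P) :
    (widget H S0 K).I (.wprod ⟨_, hp⟩) = {WPlace.wvar X, WPlace.wdollar} := rfl

theorem widget_O_node {X B C : Y}
    (hp : (X, [Symbol.nonterminal B, Symbol.nonterminal C]) ∈ H.P) :
    (widget H S0 K).O (.wprod ⟨_, hp⟩) = {WPlace.wvar B, WPlace.wvar C} := rfl

theorem widget_I_leaf {X : Y} {u : List A} (hp : (X, u.map Symbol.terminal) ∈ H.P) :
    (widget H S0 K).I (.wprod ⟨_, hp⟩) = {WPlace.wvar X} := by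
  rcases u with _ | ⟨a, _ | ⟨b, u⟩⟩ <;> rfl

theorem widget_O_leaf {X : Y} {u : List A} (hp : (X, u.map Symbol.terminal) ∈ H.P) :
    (widget H S0 K).O (.wprod ⟨_, hp⟩) =
      (u : Multiset A).map WPlace.wletter + {WPlace.wdollar} := by
  have key : ((u.map Symbol.terminal).map symWPlace : List (WPlace Y A)) =
      u.map WPlace.wletter := by
    rw [List.map_map]; rfl
  rw [Multiset.map_coe, ← key]
  rcases u with _ | ⟨a, _ | ⟨b, u⟩⟩ <;> rfl

/-- With `k` budget tokens the widget can turn a token on `X` into the letters `m`, in the presence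
of arbitrary other tokens; it then holds `k + 1` budget tokens. -/
def Runs (H : CFG' A Y) (S0 : Y) (K k : ℕ) (X : Y) (m : Multiset A) : Prop :=
  ∀ F : Multiset (WPlace Y A), (widget H S0 K).Reach
    ({WPlace.wvar X} + Multiset.replicate k WPlace.wdollar + F)
    (m.map WPlace.wletter + Multiset.replicate (k + 1) WPlace.wdollar + F)

theorem Runs.mono {k k' : ℕ} {X : Y} {m : Multiset A} (h : Runs H S0 K k X m) (hk : k ≤ k') :
    Runs H S0 K k' X m := by
  obtain ⟨j, rfl⟩ := Nat.exists_eq_add_of_le hk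
  intro F
  convert h (Multiset.replicate j WPlace.wdollar + F) using 1
  · rw [Multiset.replicate_add]; abel
  · rw [add_right_comm k j 1, Multiset.replicate_add]; abel

theorem Runs.leaf {X : Y} {u : List A} (hp : (X, u.map Symbol.terminal) ∈ H.P) (k : ℕ) :
    Runs H S0 K k X (u : Multiset A) := by
  intro F
  convert PetriNet.reach_of_fire (N := widget H S0 K) (.wprod ⟨_, hp⟩)
    (Multiset.replicate k WPlace.wdollar + F) using 1
  · rw [widget_I_leaf]; abel
  · rw [widget_O_leaf, Multiset.replicate_succ, ← Multiset.singleton_add]; abel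

theorem Runs.node_left {X B C : Y} {m₁ m₂ : Multiset A} {k : ℕ}
    (hp : (X, [Symbol.nonterminal B, Symbol.nonterminal C]) ∈ H.P)
    (h₁ : Runs H S0 K k B m₁) (h₂ : Runs H S0 K (k + 1) C m₂) :
    Runs H S0 K (k + 1) X (m₁ + m₂) := by
  intro F
  have e₀ := PetriNet.reach_of_fire (N := widget H S0 K) (.wprod ⟨_, hp⟩)
    (Multiset.replicate k WPlace.wdollar + F)
  have e₁ := h₁ ({WPlace.wvar C} + F)
  have e₂ := h₂ (m₁.map WPlace.wletter + F)
  rw [widget_I_node, widget_O_node, Multiset.insert_eq_cons, Multiset.insert_eq_cons,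
    ← Multiset.singleton_add, ← Multiset.singleton_add] at e₀
  have e₀₁ := e₀.trans (by convert e₁ using 1; abel)
  convert e₀₁.trans (by convert e₂ using 1; abel) using 1
  · rw [Multiset.replicate_succ, ← Multiset.singleton_add]; abel
  · rw [Multiset.map_add]; abel

theorem Runs.node_right {X B C : Y} {m₁ m₂ : Multiset A} {k : ℕ}
    (hp : (X, [Symbol.nonterminal B, Symbol.nonterminal C]) ∈ H.P)
    (h₁ : Runs H S0 K (k + 1) B m₁) (h₂ : Runs H S0 K k C m₂) :
    Runs H S0 K (k + 1) X (m₁ + m₂) := by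
  intro F
  have e₀ := PetriNet.reach_of_fire (N := widget H S0 K) (.wprod ⟨_, hp⟩)
    (Multiset.replicate k WPlace.wdollar + F)
  have e₁ := h₂ ({WPlace.wvar B} + F)
  have e₂ := h₁ (m₂.map WPlace.wletter + F)
  rw [widget_I_node, widget_O_node, Multiset.insert_eq_cons, Multiset.insert_eq_cons,
    ← Multiset.singleton_add, ← Multiset.singleton_add] at e₀
  have e₀₁ := e₀.trans (by convert e₁ using 1; abel)
  convert e₀₁.trans (by convert e₂ using 1; abel) using 1
  · rw [Multiset.replicate_succ, ← Multiset.singleton_add]; abel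
  · rw [Multiset.map_add]; abel

/-- `S` stands for the variables on a repetition-free path leading to the root of the tree. Either
one of them occurs again in the tree, or the tree has a pump, or no path through it repeats a
variable, and then the bound `|W| - |S|` on its height bounds the budget needed. -/
theorem found_or_pump_or_short [DecidableEq Y] {X : Y} {V : Finset Y} {m : Multiset A} {n : ℕ}
    (h : PTree H X V m n) (W : Finset Y) :
    ∀ S : Finset Y, V ⊆ W → S ⊆ W →
      (∃ Z ∈ S, SplitsAt H X Z V m n) ∨ HasPump H X V m n ∨
        ∃ k, k + S.card + 1 = W.card ∧ Runs H S0 K k X m := by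
  induction h with
  | @leaf X u hp =>
    intro S hV hS
    by_cases hX : X ∈ S
    · exact .inl ⟨X, hX, (PTree.leaf hp).splitsAt_root⟩
    · have hlt : S.card < W.card :=
        Finset.card_lt_card ⟨hS, fun hW => hX (hW (hV (by simp)))⟩
      exact .inr (.inr ⟨W.card - S.card - 1, by omega, Runs.leaf hp _⟩)
  | @node X B C V₁ V₂ m₁ m₂ n₁ n₂ hp t₁ t₂ ih₁ ih₂ =>
    intro S hV hS
    by_cases hX : X ∈ S
    · exact .inl ⟨X, hX, (PTree.node hp t₁ t₂).splitsAt_root⟩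
    have hS' : insert X S ⊆ W := Finset.insert_subset (hV (by simp)) hS
    have hV₁ : V₁ ⊆ W := fun v hv => hV (by simp [hv])
    have hV₂ : V₂ ⊆ W := fun v hv => hV (by simp [hv])
    rcases ih₁ _ hV₁ hS' with ⟨Z, hZ, h⟩ | h | ⟨k₁, hk₁, h₁⟩
    · rcases Finset.mem_insert.1 hZ with rfl | hZ
      · exact .inr (.inl (h.hasPump_left hp t₂))
      · exact .inl ⟨Z, hZ, h.left hp t₂⟩
    · exact .inr (.inl (h.left hp t₂))
    rcases ih₂ _ hV₂ hS' with ⟨Z, hZ, h⟩ | h | ⟨k₂, hk₂, h₂⟩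
    · rcases Finset.mem_insert.1 hZ with rfl | hZ
      · exact .inr (.inl (SplitsAt.hasPump_right hp t₁ h))
      · exact .inl ⟨Z, hZ, SplitsAt.right hp t₁ h⟩
    · exact .inr (.inl (HasPump.right hp t₁ h))
    rw [Finset.card_insert_of_notMem hX] at hk₁ hk₂
    obtain rfl : k₁ = k₂ := by omega
    exact .inr (.inr ⟨k₁ + 1, by omega, Runs.node_left hp h₁ (h₂.mono (by omega))⟩)

/-- Every tree can be processed, up to reordering letters, with as many budget tokens as it has
distinct variables. -/
theorem runs_of_tree [DecidableEq Y] (n : ℕ) : ∀ {X : Y} {V : Finset Y} {m : Multiset A},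
    PTree H X V m n → Runs H S0 K V.card X m := by
  induction n using Nat.strong_induction_on with
  | _ n ih =>
  intro X V m h
  cases h with
  | leaf hp => exact Runs.leaf hp _
  | @node _ B C V₁ V₂ m₁ m₂ n₁ n₂ hp t₁ t₂ =>
  -- the inner induction is on the size of the right subtree; the total size stays below the
  -- bound of the outer induction hypothesis
  have inner : ∀ b : ℕ, ∀ a V₁ V₂ m₁ m₂, PTree H B V₁ m₁ a → PTree H C V₂ m₂ b →
      a + b < n₁ + n₂ + 1 → Runs H S0 K (insert X (V₁ ∪ V₂)).card X (m₁ + m₂) := by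
    intro b
    induction b using Nat.strong_induction_on with
    | _ b ihb =>
    intro a V₁ V₂ m₁ m₂ t₁ t₂ hab
    obtain ⟨W, hW⟩ : ∃ W, W = insert X (V₁ ∪ V₂) := ⟨_, rfl⟩
    rw [← hW]
    have hV₁ : V₁ ⊆ W := fun v hv => by simp [hW, hv]
    have hV₂ : V₂ ⊆ W := fun v hv => by simp [hW, hv]
    have hXW : X ∈ W := by simp [hW]
    have r₁ : Runs H S0 K V₁.card B m₁ := ih a (by omega) t₁
    have r₂ : Runs H S0 K V₂.card C m₂ := ih b (by omega) t₂
    have hpos : 0 < W.card := Finset.card_pos.2 ⟨X, hXW⟩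
    obtain ⟨k, hk⟩ : ∃ k, W.card = k + 1 := ⟨W.card - 1, by omega⟩
    have c₁ := Finset.card_le_card hV₁
    have c₂ := Finset.card_le_card hV₂
    rw [hk] at c₁ c₂ ⊢
    rcases Nat.lt_or_ge V₁.card (k + 1) with h₁ | h₁
    · exact Runs.node_left hp (r₁.mono (by omega)) (r₂.mono c₂)
    rcases Nat.lt_or_ge V₂.card (k + 1) with h₂ | h₂
    · exact Runs.node_right hp (r₁.mono c₁) (r₂.mono (by omega))
    have e₁ : V₁ = W := Finset.eq_of_subset_of_card_le hV₁ (by omega)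
    rcases found_or_pump_or_short (S0 := S0) (K := K) t₂ W ∅ hV₂ (by simp) with
      ⟨Z, hZ, -⟩ | ⟨Z, Vp, V', mp, m', np, n', hc, hnp, t', hZ, rfl, rfl, rfl⟩ | ⟨j, hj, r⟩
    · simp at hZ
    · obtain ⟨Va, Vb, ma, mb, na, nb, hca, htb, rfl, rfl, rfl⟩ :=
        t₁.splitsAt (Z := Z) (e₁ ▸ hV₂ (by simp [hZ]))
      have r := ihb n' (by omega) _ _ _ _ _ (hca.plug (hc.plug htb)) t' (by omega)
      convert r using 1
      · rw [← hk, hW]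
        congr 1
        ext; simp only [Finset.mem_insert, Finset.mem_union]; tauto
      · abel
    · rw [Finset.card_empty] at hj
      exact Runs.node_right hp (r₁.mono c₁) (r.mono (by omega))
  exact inner n₂ n₁ V₁ V₂ m₁ m₂ t₁ t₂ (by omega)

theorem fireSeq_of_tree [DecidableEq Y] {V : Finset Y} {m : Multiset A} {n : ℕ}
    (h : PTree H S0 V m n) (hV : V.card ≤ K) :
    ∃ w, (widget H S0 K).FireSeq w {WPlace.wbegin}
      ({WPlace.wend} + m.map WPlace.wletter) := by
  have e₀ := PetriNet.reach_of_fire (N := widget H S0 K) .winit 0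
  have e₁ := (runs_of_tree (K := K) (S0 := S0) n h).mono hV 0
  have e₂ := PetriNet.reach_of_fire (N := widget H S0 K) .wexit (m.map WPlace.wletter)
  have e₀₁ := PetriNet.Reach.trans e₀ e₁
  have := e₀₁.trans (by convert e₂ using 1; rw [add_zero, add_comm]; rfl)
  exact this

end Runs

/-! ### Reading a tree off a firing sequence -/

section Forest

variable {A Y : Type} {H : CFG' A Y} {S0 : Y} {K : ℕ}

/-- The variables in the multiset `U` are the roots of a forest with Parikh image `m`. -/
def Forest [DecidableEq Y] (H : CFG' A Y) (U : Multiset Y) (m : Multiset A) : Prop :=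
  ∃ f : Multiset (Y × Multiset A), f.map Prod.fst = U ∧ (f.map Prod.snd).sum = m ∧
    ∀ p ∈ f, ∃ V n, PTree H p.1 V p.2 n

theorem Forest.cons_iff [DecidableEq Y] {X : Y} {U : Multiset Y} {m : Multiset A} :
    Forest H (X ::ₘ U) m ↔
      ∃ m₁ m₂ V n, m = m₁ + m₂ ∧ PTree H X V m₁ n ∧ Forest H U m₂ := by
  classical
  constructor
  · rintro ⟨f, hf, rfl, ht⟩
    obtain ⟨p, hp, hpX, hU⟩ := (Multiset.map_eq_cons _ _ _ _).2 hf
    obtain ⟨g, rfl⟩ := Multiset.exists_cons_of_mem hp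
    obtain ⟨V, n, h⟩ := ht p (by simp)
    subst hpX
    refine ⟨p.2, (g.map Prod.snd).sum, V, n, by simp, h, g, by simpa using hU, rfl, ?_⟩
    exact fun q hq => ht q (by simp [hq])
  · rintro ⟨m₁, m₂, V, n, rfl, h, f, rfl, rfl, ht⟩
    refine ⟨(X, m₁) ::ₘ f, by simp, by simp, ?_⟩
    intro p hp
    rcases Multiset.mem_cons.1 hp with rfl | hp
    · exact ⟨V, n, h⟩
    · exact ht p hp

theorem wvar_mem_iff {U : Multiset Y} {j : ℕ} {l : Multiset A} {X : Y} :
    WPlace.wvar X ∈ U.map WPlace.wvar + Multiset.replicate j WPlace.wdollar +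
      l.map WPlace.wletter ↔ X ∈ U := by
  simp [Multiset.mem_replicate]

/-- After `t_e` has emptied the budget no transition is enabled. -/
theorem eq_of_fireSeq_after_exit
    (hH : ∀ p ∈ H.P, (∃ B C, p.2 = [Symbol.nonterminal B, Symbol.nonterminal C]) ∨
      ∃ u : List A, p.2 = u.map Symbol.terminal)
    {w} {l : Multiset A} {M : Multiset (WPlace Y A)}
    (h : (widget H S0 K).FireSeq w ({WPlace.wend} + l.map WPlace.wletter) M) :
    M = {WPlace.wend} + l.map WPlace.wletter := by
  cases h with
  | nil => rfl
  | @cons t _ _ _ _ hf _ =>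
    exfalso
    obtain ⟨hle, -⟩ := hf
    rcases t with _ | _ | ⟨⟨X, r⟩, hp⟩
    · have : WPlace.wbegin ∈ ({WPlace.wend} + l.map WPlace.wletter : Multiset (WPlace Y A)) :=
        Multiset.mem_of_le hle (by simp [widget])
      simp at this
    · have : WPlace.wdollar ∈ ({WPlace.wend} + l.map WPlace.wletter : Multiset (WPlace Y A)) :=
        Multiset.mem_of_le hle (by simp [widget, Multiset.mem_replicate])
      simp at this
    · have : WPlace.wvar X ∈ ({WPlace.wend} + l.map WPlace.wletter : Multiset (WPlace Y A)) := by
        refine Multiset.mem_of_le hle ?_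
        rcases hH _ hp with ⟨B, C, h⟩ | ⟨u, h⟩
        · dsimp only at h; subst h; rw [widget_I_node]; simp
        · dsimp only at h; subst h; rw [widget_I_leaf]; simp
      simp at this

/-- A marking between `t_i` and `t_e` holds variables `U`, budget tokens and letters `l`, with
`K + 1` tokens on the variable and budget places together. If the final marking is reached from
it, the letters still to be produced are generated by `U`. -/
theorem forest_of_fireSeq [DecidableEq Y]
    (hH : ∀ p ∈ H.P, (∃ B C, p.2 = [Symbol.nonterminal B, Symbol.nonterminal C]) ∨
      ∃ u : List A, p.2 = u.map Symbol.terminal)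
    {w} {m : Multiset A} {M M' : Multiset (WPlace Y A)}
    (h : (widget H S0 K).FireSeq w M M') (hM' : M' = {WPlace.wend} + m.map WPlace.wletter) :
    ∀ (U : Multiset Y) (j : ℕ) (l : Multiset A),
      M = U.map WPlace.wvar + Multiset.replicate j WPlace.wdollar + l.map WPlace.wletter →
      U.card + j = K + 1 → ∃ m', Forest H U m' ∧ m = l + m' := by
  classical
  induction h with
  | nil M =>
    intro U j l hM _
    have : (WPlace.wend : WPlace Y A) ∈ M := by simp [hM']
    rw [hM] at this
    simp [Multiset.mem_replicate] at this
  | @cons t w M M₁ M' hf hs ih =>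
    intro U j l hM hj
    obtain ⟨hle, heq⟩ := hf
    rcases t with _ | _ | ⟨⟨X, r⟩, hp⟩
    · have : (WPlace.wbegin : WPlace Y A) ∈ M := Multiset.mem_of_le hle (by simp [widget])
      rw [hM] at this
      simp [Multiset.mem_replicate] at this
    · have hcount := Multiset.count_le_of_le WPlace.wdollar hle
      have hI : (widget H S0 K).I .wexit = Multiset.replicate (K + 1) WPlace.wdollar := rfl
      have hO : (widget H S0 K).O .wexit = {WPlace.wend} := rfl
      have hU0 : Multiset.count (WPlace.wdollar : WPlace Y A) (U.map WPlace.wvar) = 0 :=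
        Multiset.count_eq_zero.2 (by simp)
      have hl0 : Multiset.count (WPlace.wdollar : WPlace Y A) (l.map WPlace.wletter) = 0 :=
        Multiset.count_eq_zero.2 (by simp)
      rw [hI, hM, Multiset.count_add, Multiset.count_add, hU0, hl0,
        Multiset.count_replicate_self, Multiset.count_replicate_self] at hcount
      obtain rfl : j = K + 1 := by omega
      obtain rfl : U = 0 := Multiset.card_eq_zero.1 (by omega)
      have hM₁ : M₁ = {WPlace.wend} + l.map WPlace.wletter := by
        rw [hI, hO, hM] at heq
        apply add_right_cancel (b := Multiset.replicate (K + 1) WPlace.wdollar)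
        rw [heq, Multiset.map_zero]
        abel
      subst hM₁
      have hfin := eq_of_fireSeq_after_exit hH hs
      rw [hM'] at hfin
      have hml : m = l := Multiset.map_injective (f := (WPlace.wletter : A → WPlace Y A))
        (fun _ _ h => WPlace.wletter.inj h) (add_left_cancel hfin)
      exact ⟨0, ⟨0, by simp⟩, by simp [hml]⟩
    · rcases hH _ hp with ⟨B, C, h⟩ | ⟨u, h⟩
      · dsimp only at h; subst h
        rw [widget_I_node] at hle heq
        rw [widget_O_node] at heq
        have hX : X ∈ U := by
          rw [← wvar_mem_iff (j := j) (l := l), ← hM]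
          exact Multiset.mem_of_le hle (by simp)
        have hd : (WPlace.wdollar : WPlace Y A) ∈ M := Multiset.mem_of_le hle (by simp)
        rw [hM] at hd
        simp [Multiset.mem_replicate] at hd
        obtain ⟨i, rfl⟩ := Nat.exists_eq_succ_of_ne_zero hd
        obtain ⟨U', rfl⟩ := Multiset.exists_cons_of_mem hX
        obtain ⟨m', hF, rfl⟩ := ih hM' (B ::ₘ C ::ₘ U') i l (by
          apply add_right_cancel (b := ({WPlace.wvar X, WPlace.wdollar} : Multiset (WPlace Y A)))
          rw [heq, hM]
          simp only [Multiset.map_cons, Multiset.replicate_succ, Multiset.insert_eq_cons]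
          simp only [← Multiset.singleton_add]
          abel) (by simp at hj ⊢; omega)
        obtain ⟨m₁, m₂, V₁, n₁, rfl, t₁, hF⟩ := Forest.cons_iff.1 hF
        obtain ⟨m₂, m₃, V₂, n₂, rfl, t₂, hF⟩ := Forest.cons_iff.1 hF
        exact ⟨_, Forest.cons_iff.2 ⟨m₁ + m₂, m₃, _, _, rfl, PTree.node hp t₁ t₂, hF⟩, by abel⟩
      · dsimp only at h; subst h
        rw [widget_I_leaf] at hle heq
        rw [widget_O_leaf] at heq
        have hX : X ∈ U := by
          rw [← wvar_mem_iff (j := j) (l := l), ← hM]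
          exact Multiset.mem_of_le hle (by simp)
        obtain ⟨U', rfl⟩ := Multiset.exists_cons_of_mem hX
        obtain ⟨m', hF, rfl⟩ := ih hM' U' (j + 1) (l + (u : Multiset A)) (by
          apply add_right_cancel (b := ({WPlace.wvar X} : Multiset (WPlace Y A)))
          rw [heq, hM]
          simp only [Multiset.map_cons, Multiset.replicate_succ, Multiset.map_add]
          simp only [← Multiset.singleton_add]
          abel) (by simp at hj ⊢; omega)
        exact ⟨_, Forest.cons_iff.2 ⟨_, m', _, _, rfl, PTree.leaf hp, hF⟩, by abel⟩

theorem tree_of_fireSeq [DecidableEq Y]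
    (hH : ∀ p ∈ H.P, (∃ B C, p.2 = [Symbol.nonterminal B, Symbol.nonterminal C]) ∨
      ∃ u : List A, p.2 = u.map Symbol.terminal)
    {w} {m : Multiset A} (h : (widget H S0 K).FireSeq w {WPlace.wbegin}
      ({WPlace.wend} + m.map WPlace.wletter)) : ∃ V n, PTree H S0 V m n := by
  generalize hM : ({WPlace.wbegin} : Multiset (WPlace Y A)) = M at h
  generalize hM' : {WPlace.wend} + m.map WPlace.wletter = M' at h
  cases h with
  | nil =>
    have : (WPlace.wend : WPlace Y A) ∈ M := by simp [← hM']
    rw [← hM] at this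
    simp at this
  | @cons t _ _ M₁ _ hf hs =>
    obtain ⟨hle, heq⟩ := hf
    rcases t with _ | _ | ⟨⟨X, r⟩, hp⟩
    · have hI : (widget H S0 K).I .winit = {WPlace.wbegin} := rfl
      have hO : (widget H S0 K).O .winit =
        {WPlace.wvar S0} + Multiset.replicate K WPlace.wdollar := rfl
      rw [hI, hO, ← hM, add_comm] at heq
      obtain ⟨m', hF, rfl⟩ := forest_of_fireSeq hH hs hM'.symm {S0} K 0
        (by rw [add_left_cancel heq]; simp) (by simp [add_comm])
      obtain ⟨m₁, m₂, V, n, rfl, t, f, hf, rfl, -⟩ := Forest.cons_iff.1 hF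
      obtain rfl := Multiset.map_eq_zero.1 hf
      exact ⟨V, n, by simpa using t⟩
    · have : (WPlace.wdollar : WPlace Y A) ∈ M :=
        Multiset.mem_of_le hle (by simp [widget, Multiset.mem_replicate])
      rw [← hM] at this
      simp at this
    · have : (WPlace.wvar X : WPlace Y A) ∈ M := by
        refine Multiset.mem_of_le hle ?_
        rcases hH _ hp with ⟨B, C, h⟩ | ⟨u, h⟩
        · dsimp only at h; subst h; rw [widget_I_node]; simp
        · dsimp only at h; subst h; rw [widget_I_leaf]; simp
      rw [← hM] at this
      simp at this

end Forest

/-! ### Derivations as trees -/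

section Words

variable {T N : Type} {G : CFG' T N}

/-- `WTree G X w`: the normal-form grammar `G` has a derivation tree with root `X` and yield the
word `w`. -/
inductive WTree (G : CFG' T N) : N → List T → Prop
  | eps {X : N} : (X, []) ∈ G.P → WTree G X []
  | single {X : N} {a : T} : (X, [Symbol.terminal a]) ∈ G.P → WTree G X [a]
  | node {X B C : N} {u v : List T} :
      (X, [Symbol.nonterminal B, Symbol.nonterminal C]) ∈ G.P →
      WTree G B u → WTree G C v → WTree G X (u ++ v)

/-- `Yields G α w`: the sentential form `α` is the sequence of roots of a sequence of trees with
joint yield `w`. -/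
inductive Yields (G : CFG' T N) : List (Symbol T N) → List T → Prop
  | nil : Yields G [] []
  | letter {α : List (Symbol T N)} {w : List T} (a : T) :
      Yields G α w → Yields G (Symbol.terminal a :: α) (a :: w)
  | var {α : List (Symbol T N)} {X : N} {u w : List T} :
      WTree G X u → Yields G α w → Yields G (Symbol.nonterminal X :: α) (u ++ w)

theorem Yields.append {α β : List (Symbol T N)} {u v : List T} (h : Yields G α u)
    (h' : Yields G β v) : Yields G (α ++ β) (u ++ v) := by
  induction h with
  | nil => exact h'
  | letter a _ ih => exact .letter a ih
  | var t _ ih => rw [List.append_assoc]; exact .var t ih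

theorem Yields.of_append {α β : List (Symbol T N)} {w : List T} (h : Yields G (α ++ β) w) :
    ∃ u v, w = u ++ v ∧ Yields G α u ∧ Yields G β v := by
  induction α generalizing w with
  | nil => exact ⟨[], w, rfl, .nil, h⟩
  | cons s α ih =>
    cases h with
    | letter a h =>
      obtain ⟨u, v, rfl, hu, hv⟩ := ih h
      exact ⟨a :: u, v, rfl, .letter a hu, hv⟩
    | var t h =>
      obtain ⟨u, v, rfl, hu, hv⟩ := ih h
      exact ⟨_, v, (List.append_assoc _ _ _).symm, .var t hu, hv⟩

theorem Yields.terminals (w : List T) : Yields G (w.map Symbol.terminal) w := by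
  induction w with
  | nil => exact .nil
  | cons a w ih => exact .letter a ih

theorem Yields.wtree (hG : G.NormalForm) {X : N} {α : List (Symbol T N)} {w : List T}
    (hp : (X, α) ∈ G.P) (h : Yields G α w) : WTree G X w := by
  rcases hG _ hp with ⟨B, C, hα⟩ | ⟨a, hα⟩ | hα <;> dsimp only at hα <;> subst hα
  · cases h with
    | var t₁ h =>
      cases h with
      | var t₂ h =>
        cases h
        rw [List.append_nil]
        exact .node hp t₁ t₂
  · cases h with
    | letter _ h => cases h; exact .single hp
  · cases h; exact .eps hp

theorem CFG'.Derives.yields (hG : G.NormalForm) {α : List (Symbol T N)} {w : List T}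
    (h : G.Derives α (w.map Symbol.terminal)) : Yields G α w := by
  induction h using Relation.ReflTransGen.head_induction_on with
  | refl => exact .terminals w
  | head hs _ ih =>
    obtain ⟨y, z, hp⟩ := hs
    obtain ⟨u, v, rfl, hu, hv⟩ := ih.of_append
    obtain ⟨u₁, u₂, rfl, hu₁, hu₂⟩ := hu.of_append
    refine (hu₁.append ?_).append hv
    simpa using Yields.var (hu₂.wtree hG hp) .nil

theorem CFG'.Derives.context {α β : List (Symbol T N)} (h : G.Derives α β)
    (y z : List (Symbol T N)) : G.Derives (y ++ α ++ z) (y ++ β ++ z) := by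
  refine Relation.ReflTransGen.lift (fun γ => y ++ γ ++ z) ?_ _ _ h
  rintro _ _ ⟨y', z', hp⟩
  simpa [Function.onFun] using CFG'.Step.step (G := G) (y ++ y') (z' ++ z) hp

theorem CFG'.derives_of_mem {X : N} {α : List (Symbol T N)} (hp : (X, α) ∈ G.P) :
    G.Derives [Symbol.nonterminal X] α :=
  .single (by simpa using CFG'.Step.step (G := G) [] [] hp)

theorem WTree.derives {X : N} {w : List T} (h : WTree G X w) :
    G.Derives [Symbol.nonterminal X] (w.map Symbol.terminal) := by
  induction h with
  | eps hp => exact CFG'.derives_of_mem hp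
  | single hp => exact CFG'.derives_of_mem hp
  | @node X B C u v hp _ _ ih₁ ih₂ =>
    have e₁ := ih₁.context [] [Symbol.nonterminal C]
    have e₂ := ih₂.context (u.map Symbol.terminal) []
    simp only [List.nil_append, List.append_nil, List.singleton_append] at e₁ e₂
    rw [List.map_append]
    exact ((CFG'.derives_of_mem hp).trans e₁).trans e₂

theorem derives_iff_wtree (hG : G.NormalForm) {X : N} {w : List T} :
    G.Derives [Symbol.nonterminal X] (w.map Symbol.terminal) ↔ WTree G X w := by
  refine ⟨fun h => ?_, WTree.derives⟩
  have hy := h.yields hG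
  clear h
  cases hy with
  | var t h => cases h; simpa using t

end Words

/-! ### Derivations of a regular grammar as paths -/

section Regular

variable {T D : Type} {R : CFG' T D}

/-- `RPath R d w d'`: the productions `d → a·d'` of `R`, read as labelled edges, contain a path
from `d` to `d'` with label `w`. -/
inductive RPath (R : CFG' T D) : D → List T → D → Prop
  | nil (d : D) : RPath R d [] d
  | cons {d e d' : D} {a : T} {w : List T} :
      (d, [Symbol.terminal a, Symbol.nonterminal e]) ∈ R.P → RPath R e w d' →
      RPath R d (a :: w) d'

theorem RPath.append {d e d' : D} {u v : List T} (h : RPath R d u e) (h' : RPath R e v d') :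
    RPath R d (u ++ v) d' := by
  induction h with
  | nil => exact h'
  | cons hp _ ih => exact .cons hp (ih h')

theorem RPath.of_append {d d' : D} {u v : List T} (h : RPath R d (u ++ v) d') :
    ∃ e, RPath R d u e ∧ RPath R e v d' := by
  induction u generalizing d with
  | nil => exact ⟨d, .nil d, h⟩
  | cons a u ih =>
    cases h with
    | cons hp h =>
      obtain ⟨e, hu, hv⟩ := ih h
      exact ⟨e, .cons hp hu, hv⟩

theorem terminal_append_inj {w : List T} {y z : List (Symbol T D)} {X X' : D}
    (h : y ++ [Symbol.nonterminal X'] ++ z =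
      w.map Symbol.terminal ++ [Symbol.nonterminal X]) :
    y = w.map Symbol.terminal ∧ X' = X ∧ z = [] := by
  induction w generalizing y with
  | nil =>
    rcases y with _ | ⟨s, y⟩ <;> simp_all
  | cons a w ih =>
    rcases y with _ | ⟨s, y⟩
    · simp at h
    · simp only [List.cons_append, List.map_cons, List.cons.injEq] at h
      obtain ⟨rfl, h₂⟩ := h
      obtain ⟨rfl, rfl, rfl⟩ := ih h₂
      simp

theorem CFG'.Derives.rpath_or (hR : R.RegularForm) {d : D} {α : List (Symbol T D)}
    (h : R.Derives [Symbol.nonterminal d] α) :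
    (∃ w d', α = w.map Symbol.terminal ++ [Symbol.nonterminal d'] ∧ RPath R d w d') ∨
      ∃ w : List T, α = w.map Symbol.terminal := by
  induction h with
  | refl => exact .inl ⟨[], d, rfl, .nil d⟩
  | tail _ hs ih =>
    obtain ⟨y, z, hp⟩ := hs
    rcases ih with ⟨w, d', hα, hw⟩ | ⟨w, hα⟩
    · obtain ⟨rfl, rfl, rfl⟩ := terminal_append_inj hα
      rcases hR _ hp with ⟨a, e, h⟩ | h <;> dsimp only at h <;> subst h
      · exact .inl ⟨w ++ [a], e, by simp, hw.append (.cons hp (.nil e))⟩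
      · exact .inr ⟨w, by simp⟩
    · exfalso
      rename_i A _ _
      have : Symbol.nonterminal A ∈ w.map (Symbol.terminal (N := D)) := by
        rw [← hα]; simp
      simp at this

theorem RPath.derives {d d' : D} {w : List T} (h : RPath R d w d') :
    R.Derives [Symbol.nonterminal d] (w.map Symbol.terminal ++ [Symbol.nonterminal d']) := by
  induction h with
  | nil => exact .refl
  | @cons d e d' a w hp _ ih =>
    have e₁ := ih.context [Symbol.terminal a] []
    simp only [List.append_nil, List.singleton_append] at e₁
    exact (CFG'.derives_of_mem hp).trans e₁

theorem derives_iff_rpath (hR : R.RegularForm) {d d' : D} {w : List T} :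
    R.Derives [Symbol.nonterminal d] (w.map Symbol.terminal ++ [Symbol.nonterminal d']) ↔
      RPath R d w d' := by
  refine ⟨fun h => ?_, RPath.derives⟩
  rcases h.rpath_or hR with ⟨w', e, h, hp⟩ | ⟨w', h⟩
  · have h' := terminal_append_inj (z := []) (by simpa using h)
    obtain ⟨h₁, rfl, -⟩ := h'
    obtain rfl := List.map_injective_iff.2
      (fun _ _ h => Symbol.terminal.inj h : Function.Injective
        (Symbol.terminal : T → Symbol T D)) h₁
    exact hp
  · exfalso
    have : Symbol.nonterminal d' ∈ w'.map (Symbol.terminal (N := D)) := by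
      rw [← h]; simp
    simp at this

end Regular

/-! ### Trees of the product grammar -/

section Product

variable {Sg Si N D : Type} {G : CFG' (Sg ⊕ Si) N} {R : CFG' (Sg ⊕ Si) D}

theorem projProductGrammar_form (p : (D × N × D) × List (Symbol Sg (D × N × D)))
    (hp : p ∈ (projProductGrammar G R).P) :
    (∃ B C, p.2 = [Symbol.nonterminal B, Symbol.nonterminal C]) ∨
      ∃ u : List Sg, p.2 = u.map Symbol.terminal := by
  rcases hp with ⟨A, d, -, rfl⟩ | ⟨A, a, d, d', -, -, rfl⟩ | ⟨A, B, C, d0, d1, d2, -, rfl⟩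
  · exact .inr ⟨[], rfl⟩
  · exact .inr ⟨_, rfl⟩
  · exact .inl ⟨_, _, rfl⟩

theorem filterMap_singleton_getLeft (a : Sg ⊕ Si) :
    [a].filterMap Sum.getLeft? = a.getLeft?.toList := by
  cases a <;> rfl

theorem WTree.product [DecidableEq (D × N × D)] {X : N} {w : List (Sg ⊕ Si)}
    (h : WTree G X w) : ∀ {d d' : D}, RPath R d w d' →
      ∃ V n, PTree (projProductGrammar G R) (d, X, d') V
        (w.filterMap Sum.getLeft? : List Sg) n := by
  induction h with
  | eps hp =>
    intro d d' hR
    cases hR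
    exact ⟨_, _, PTree.leaf (u := []) (.inl ⟨_, _, hp, rfl⟩)⟩
  | @single X a hp =>
    intro d d' hR
    cases hR with
    | cons hd hR =>
      cases hR
      rw [filterMap_singleton_getLeft]
      exact ⟨_, _, PTree.leaf (.inr (.inl ⟨_, a, _, _, hp, hd, rfl⟩))⟩
  | node hp _ _ ih₁ ih₂ =>
    intro d d' hR
    obtain ⟨e, hu, hv⟩ := hR.of_append
    obtain ⟨V₁, n₁, t₁⟩ := ih₁ hu
    obtain ⟨V₂, n₂, t₂⟩ := ih₂ hv
    rw [List.filterMap_append, ← Multiset.coe_add]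
    exact ⟨_, _, PTree.node (.inr (.inr ⟨_, _, _, _, _, _, hp, rfl⟩)) t₁ t₂⟩

theorem PTree.unproduct [DecidableEq (D × N × D)] {q : D × N × D} {V : Finset (D × N × D)}
    {m : Multiset Sg} {n : ℕ} (h : PTree (projProductGrammar G R) q V m n) :
    ∃ w : List (Sg ⊕ Si), WTree G q.2.1 w ∧ RPath R q.1 w q.2.2 ∧
      m = (w.filterMap Sum.getLeft? : List Sg) := by
  induction h with
  | @leaf q u hp =>
    rcases hp with ⟨A, d, hp, h⟩ | ⟨A, a, d, d', hp, hd, h⟩ | ⟨A, B, C, d0, d1, d2, hp, h⟩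
    · simp only [Prod.mk.injEq, List.map_eq_nil_iff] at h
      obtain ⟨rfl, rfl⟩ := h
      exact ⟨[], .eps hp, .nil d, rfl⟩
    · rw [Prod.mk.injEq] at h
      obtain ⟨rfl, h⟩ := h
      obtain rfl := List.map_injective_iff.2
        (fun _ _ h => Symbol.terminal.inj h : Function.Injective
          (Symbol.terminal : Sg → Symbol Sg (D × N × D))) h
      exact ⟨[a], .single hp, .cons hd (.nil d'), by rw [filterMap_singleton_getLeft]⟩
    · rw [Prod.mk.injEq] at h
      rcases u with _ | ⟨b, u⟩ <;> simp at h
  | @node q q₁ q₂ V₁ V₂ m₁ m₂ n₁ n₂ hp _ _ ih₁ ih₂ =>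
    rcases hp with ⟨A, d, hp, h⟩ | ⟨A, a, d, d', hp, hd, h⟩ | ⟨A, B, C, d0, d1, d2, hp, h⟩
    · simp at h
    · cases a <;> simp at h
    · simp only [Prod.mk.injEq, List.cons.injEq, Symbol.nonterminal.injEq, and_true] at h
      obtain ⟨rfl, rfl, rfl⟩ := h
      obtain ⟨u, hu, hu', rfl⟩ := ih₁
      obtain ⟨v, hv, hv', rfl⟩ := ih₂
      exact ⟨u ++ v, .node hp hu hv, hu'.append hv', by
        rw [List.filterMap_append, ← Multiset.coe_add]⟩

end Product

/-- Adequacy of the widget `N_c` built from `G^c`: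
`(d1, {a}) →a (d2, m)` iff some firing sequence of `N_c` leads from `{(begin,c)}` to
`{(end,c)} ⊕ m`. -/
theorem widget_adequate {D Sg Si N : Type}
    [Fintype D] [Fintype Sg] [Fintype Si] [Fintype N]
    (P : AsyncProgram D Sg Si N) (hG : P.G.NormalForm) (hGfin : P.G.P.Finite)
    (hR : P.R.RegularForm) (hRfin : P.R.P.Finite)
    (d1 d2 : D) (a : Sg) (m : Multiset Sg) :
    P.Trans a (d1, {a}) (d2, m) ↔
      ∃ w : List (WTrans {p // p ∈ (projProductGrammar P.G P.R).P}),
        (widget (projProductGrammar P.G P.R) (d1, P.X a, d2)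
            (Fintype.card (D × N × D))).FireSeq
          w {WPlace.wbegin} ({WPlace.wend} + m.map WPlace.wletter) := by
  classical
  constructor
  · rintro ⟨m₀, w, h₀, h₁, hRd, hGd⟩
    obtain rfl : m₀ = 0 := by simpa using h₀
    obtain rfl : m = (w.filterMap Sum.getLeft? : List Sg) := by simpa using h₁
    obtain ⟨V, n, t⟩ :=
      ((derives_iff_wtree hG).1 hGd).product ((derives_iff_rpath hR).1 hRd)
    exact fireSeq_of_tree t (Finset.card_le_univ V)
  · rintro ⟨w, h⟩
    obtain ⟨V, n, t⟩ := tree_of_fireSeq projProductGrammar_form h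
    obtain ⟨u, hu, hu', rfl⟩ := t.unproduct
    exact ⟨0, u, by simp, by simp, hu'.derives, hu.derives⟩
end

section
/- Let (N, m_ι) be an initialized Petri net and T' a subset of its transitions. There exists an infinite firing sequence m_ι = n0 →t0 n1 →t1 ⋯ in which t_i ∈ T' for infinitely many i if and only if there exist markings n, n' and finite transition sequences w1, w2 such that m_ι →w1 n, n →w2 n', n ≼ n', and at least one transition of T' occurs in w2. -/
namespace PetriNet

variable {S T : Type}

/-- The net has an infinite run from `m` firing transitions of `T'` infinitely often. -/
def HasRun (N : PetriNet S T) (T' : Set T) (m : Multiset S) : Prop :=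
  ∃ (n : ℕ → Multiset S) (t : ℕ → T),
    n 0 = m ∧ (∀ i : ℕ, N.Fire (t i) (n i) (n (i + 1))) ∧ {i : ℕ | t i ∈ T'}.Infinite

lemma Fire.add_right {N : PetriNet S T} {t : T} {m m' : Multiset S} (h : N.Fire t m m')
    (x : Multiset S) : N.Fire t (m + x) (m' + x) :=
  ⟨h.1.trans (Multiset.le_add_right m x), by
    rw [add_right_comm, h.2, add_right_comm]⟩

lemma fireSeq_segment {N : PetriNet S T} {n : ℕ → Multiset S} {t : ℕ → T}
    (h : ∀ i, N.Fire (t i) (n i) (n (i + 1))) (k i : ℕ) :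
    N.FireSeq ((List.range' i k).map t) (n i) (n (i + k)) := by
  induction k generalizing i with
  | zero => exact .nil _
  | succ k ih =>
    rw [List.range'_succ, List.map_cons, ← Nat.add_assoc, Nat.add_right_comm]
    exact .cons (h i) (ih (i + 1))

/-- A finite firing sequence, presented by the sequence `c` of its intermediate markings. The
values of `c` beyond `w.length` are irrelevant. -/
lemma FireSeq.exists_markings {N : PetriNet S T} {w : List T} {m m' : Multiset S}
    (h : N.FireSeq w m m') :
    ∃ c : ℕ → Multiset S, c 0 = m ∧ c w.length = m' ∧
      ∀ (i : ℕ) (hi : i < w.length), N.Fire w[i] (c i) (c (i + 1)) := by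
  induction h with
  | nil m => exact ⟨fun _ => m, rfl, rfl, fun i hi => absurd hi (by simp)⟩
  | @cons t w m m1 m' hf _ ih =>
    obtain ⟨c, h0, hl, hc⟩ := ih
    refine ⟨fun i => Nat.casesOn i m c, rfl, hl, fun i hi => ?_⟩
    cases i with
    | zero => simpa [h0] using hf
    | succ i => simpa using hc i (by simpa using hi)

lemma exists_run_of_fireSeq {N : PetriNet S T} {T' : Set T} {w : List T} {m m' : Multiset S}
    (h : N.FireSeq w m m') (hr : N.HasRun T' m') : N.HasRun T' m := by
  induction h with
  | nil m => exact hr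
  | @cons t w m m1 m' hf _ ih =>
    obtain ⟨n, s, h0, hn, hs⟩ := ih hr
    refine ⟨fun i => Nat.casesOn i m n, fun i => Nat.casesOn i t s, rfl, fun i => ?_, ?_⟩
    · cases i with
      | zero => simpa [h0] using hf
      | succ i => exact hn i
    · refine (hs.image (Nat.succ_injective.injOn)).mono ?_
      rintro _ ⟨i, hi, rfl⟩
      exact hi

lemma exists_run_of_pump {N : PetriNet S T} {T' : Set T} {w : List T} {n n' : Multiset S}
    (h : N.FireSeq w n n') (hle : n ≤ n') (hw : ∃ t ∈ w, t ∈ T') : N.HasRun T' n := by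
  obtain ⟨d, rfl⟩ := Multiset.le_iff_exists_add.1 hle
  obtain ⟨c, h0, hl, hc⟩ := h.exists_markings
  obtain ⟨_, hmem, hT⟩ := hw
  obtain ⟨r, hr, rfl⟩ := List.getElem_of_mem hmem
  have hk : 0 < w.length := by omega
  refine ⟨fun i => c (i % w.length) + (i / w.length) • d,
    fun i => w[i % w.length]'(Nat.mod_lt _ hk), by simp [h0], fun i => ?_, ?_⟩
  · have hf := (hc _ (Nat.mod_lt i hk)).add_right ((i / w.length) • d)
    have hi := Nat.div_add_mod i w.length
    have hlt := Nat.mod_lt i hk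
    suffices hs : c ((i + 1) % w.length) + ((i + 1) / w.length) • d =
        c (i % w.length + 1) + (i / w.length) • d by
      simpa only [hs] using hf
    rcases Nat.lt_or_ge (i % w.length + 1) w.length with hlt' | hge
    · obtain ⟨hq, hm⟩ := (Nat.div_mod_unique hk (a := i + 1) (c := i % w.length + 1)
        (d := i / w.length)).2 ⟨by omega, hlt'⟩
      rw [hq, hm]
    · have he : i % w.length + 1 = w.length := by omega
      -- At the end of a period, `c w.length = c 0 + d` passes one `d` to the multiple of `d`.
      obtain ⟨hq, hm⟩ := (Nat.div_mod_unique hk (a := i + 1) (c := 0)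
        (d := i / w.length + 1)).2 ⟨by rw [Nat.mul_add]; omega, hk⟩
      rw [hq, hm, he, hl, h0, succ_nsmul', add_assoc]
  · refine Set.infinite_of_forall_exists_gt fun i => ⟨r + w.length * (i + 1), ?_, ?_⟩
    · simpa [Nat.add_mul_mod_self_left, Nat.mod_eq_of_lt hr] using hT
    · have := Nat.le_mul_of_pos_left (i + 1) hk
      omega

/-- Dickson's lemma for markings over finitely many places. -/
lemma exists_lt_le [Finite S] (f : ℕ → Multiset S) : ∃ i j, i < j ∧ f i ≤ f j := by
  classical
  obtain ⟨i, j, hij, h⟩ := wellQuasiOrdered_le (fun k s => (f k).count s : ℕ → S → ℕ)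
  exact ⟨i, j, hij, Multiset.le_iff_count.2 h⟩

end PetriNet

/-- There is an infinite firing sequence from `m_ι` firing transitions of `T'` infinitely
often iff there are markings `n ≼ n'` with `m_ι →w1 n →w2 n'` and some transition of `T'`
occurring in `w2`. -/
theorem infinite_run_iff_pumping {S Tt : Type} [Finite S] [Nonempty S] [Finite Tt]
    (N : PetriNet S Tt) (mι : Multiset S) (T' : Set Tt) :
    (∃ (n : ℕ → Multiset S) (t : ℕ → Tt),
      n 0 = mι ∧ (∀ i : ℕ, N.Fire (t i) (n i) (n (i + 1))) ∧
      {i : ℕ | t i ∈ T'}.Infinite) ↔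
    (∃ (n n' : Multiset S) (w1 w2 : List Tt),
      N.FireSeq w1 mι n ∧ N.FireSeq w2 n n' ∧ n ≤ n' ∧ ∃ t ∈ w2, t ∈ T') := by
  constructor
  · rintro ⟨n, t, rfl, hn, hinf⟩
    obtain ⟨i, j, hij, hle⟩ := PetriNet.exists_lt_le fun k => n (Nat.nth (fun i => t i ∈ T') k)
    have hlt := Nat.nth_strictMono (p := fun i => t i ∈ T') hinf hij
    have hT := Nat.nth_mem_of_infinite (p := fun i => t i ∈ T') hinf i
    generalize Nat.nth (fun i => t i ∈ T') i = a at *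
    generalize Nat.nth (fun i => t i ∈ T') j = b at *
    obtain ⟨k, rfl⟩ := Nat.exists_eq_add_of_lt hlt
    refine ⟨n a, n (a + (k + 1)), (List.range' 0 a).map t, _, ?_,
      PetriNet.fireSeq_segment hn (k + 1) a, hle, t a, ?_, hT⟩
    · have h := PetriNet.fireSeq_segment hn a 0
      rwa [Nat.zero_add] at h
    · simp [List.range'_succ]
  · rintro ⟨n, n', w1, w2, h1, h2, hle, hw⟩
    exact PetriNet.exists_run_of_fireSeq h1 (PetriNet.exists_run_of_pump h2 hle hw)
end

section
/- For every 2-counter machine C = ({c1, c2}, L, Instr) and every location l_f ∈ L, there exist a Petri net with reset arcs and one inhibitor arc (N, m0) and a place p of N such that the configuration ⟨l_f, 0, 0⟩ is reachable in C if and only if the marking consisting of a single token in p (and no tokens elsewhere) is coverable in (N, m0). -/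
/-!
The counters are simulated by two places `ctr 0`, `ctr 1`, the control location by a token
in a place `loc l`, and a further place `sum` is meant to hold as many tokens as the two
counters together: increments and decrements act on a counter and on `sum` simultaneously.
A zero test is simulated by a transition that resets the tested counter without looking at it
(and without touching `sum`), while the nonzero branch takes a token out of the counter and puts
it back. Resetting a nonempty counter therefore does not block the net, but creates a surplus
of `sum` over `ctr 0 + ctr 1`, and no transition ever decreases this surplus.
A last transition moves the token from `loc lf` to the place `goal`, provided that `sum` is
empty; this is the only use of the inhibitor arc. Emptiness of `sum` says at once that both
counters are zero and that the surplus is zero, so that no zero test was ever guessed wrongly and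
the run of the net is a run of the machine. Hence `goal` can be marked iff `⟨lf, 0, 0⟩` is
reachable. The two directions are `exists_fireSeq` and `inv_of_fireSeq`.

The net depends explicitly on `C` and `lf` (`simNet`), and not on the truth value of the
reachability statement.
-/

/-- Instructions of a 2-counter machine. -/
inductive Instr2 (L : Type)
  | inc (j : Fin 2) (l' : L) : Instr2 L
  | dec (j : Fin 2) (l' : L) : Instr2 L
  | zerotest (j : Fin 2) (l' l'' : L) : Instr2 L

/-- A 2-counter machine: a labelling of locations by instructions and an initial
location. -/
structure CM2 (L : Type) where
  instr : L → Instr2 L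
  l1 : L

namespace CM2

variable {L : Type}

/-- One step of a 2-counter machine on configurations `(location, counter values)`. -/
inductive Step (C : CM2 L) : L × (Fin 2 → ℕ) → L × (Fin 2 → ℕ) → Prop
  | inc {l : L} {v : Fin 2 → ℕ} {j : Fin 2} {l' : L} :
      C.instr l = Instr2.inc j l' →
      Step C (l, v) (l', Function.update v j (v j + 1))
  | dec {l : L} {v : Fin 2 → ℕ} {j : Fin 2} {l' : L} :
      C.instr l = Instr2.dec j l' → 0 < v j →
      Step C (l, v) (l', Function.update v j (v j - 1))
  | zerotestZero {l : L} {v : Fin 2 → ℕ} {j : Fin 2} {l' l'' : L} :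
      C.instr l = Instr2.zerotest j l' l'' → v j = 0 →
      Step C (l, v) (l', v)
  | zerotestPos {l : L} {v : Fin 2 → ℕ} {j : Fin 2} {l' l'' : L} :
      C.instr l = Instr2.zerotest j l' l'' → v j ≠ 0 →
      Step C (l, v) (l'', v)

/-- Reachability from the initial configuration `⟨l1, 0, 0⟩`. -/
def Reachable (C : CM2 L) (c : L × (Fin 2 → ℕ)) : Prop :=
  Relation.ReflTransGen C.Step (C.l1, fun _ => 0) c

end CM2

/-- A Petri net with reset arcs and one inhibitor arc. -/
structure PNRI (S T : Type) where
  I : T → Multiset S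
  O : T → Multiset S
  Z : T → Set S
  inhib : T × S

namespace PNRI

variable {S T : Type} [DecidableEq S]

/-- Firing: `t` is enabled at `m` iff `I(t) ≼ m` and, if the inhibitor arc is `(t, q)`,
`m(q) = 0`; the reset places are emptied before the output tokens are produced. -/
def Fire (N : PNRI S T) (t : T) (m m' : Multiset S) : Prop :=
  N.I t ≤ m ∧
  (∀ q : S, N.inhib = (t, q) → q ∉ m) ∧
  ∃ m1 m2 : Multiset S,
    m1 + N.I t = m ∧
    (∀ s ∈ N.Z t, s ∉ m2) ∧
    (∀ s ∉ N.Z t, m2.count s = m1.count s) ∧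
    m' = m2 + N.O t

/-- Firing a finite sequence of transitions. -/
inductive FireSeq (N : PNRI S T) : List T → Multiset S → Multiset S → Prop
  | nil (m : Multiset S) : FireSeq N [] m m
  | cons {t : T} {w : List T} {m m1 m' : Multiset S} :
      N.Fire t m m1 → FireSeq N w m1 m' → FireSeq N (t :: w) m m'

/-- Reachability from `m0`. -/
def Reach (N : PNRI S T) (m0 m : Multiset S) : Prop :=
  ∃ w : List T, N.FireSeq w m0 m

/-- Coverability from `m0`. -/
def Coverable (N : PNRI S T) (m0 m : Multiset S) : Prop :=
  ∃ m' : Multiset S, N.Reach m0 m' ∧ m ≤ m'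

end PNRI

namespace PNRI

variable {S T : Type} [DecidableEq S]

/-! ### Firing of transitions -/

open Classical in
/-- The successor marking is determined by its multiplicities. -/
theorem Fire.count_eq {N : PNRI S T} {t : T} {m m' : Multiset S} (h : N.Fire t m m') (s : S) :
    m'.count s = (if s ∈ N.Z t then 0 else m.count s - (N.I t).count s) + (N.O t).count s := by
  obtain ⟨-, -, m1, m2, rfl, hz, hnz, rfl⟩ := h
  by_cases hs : s ∈ N.Z t
  · simp [hs, Multiset.count_eq_zero_of_notMem (hz s hs)]
  · simp [hs, hnz s hs]

open Classical in
theorem exists_fire {N : PNRI S T} {t : T} {m : Multiset S} (hI : N.I t ≤ m)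
    (hq : ∀ q : S, N.inhib = (t, q) → q ∉ m) : ∃ m', N.Fire t m m' := by
  refine ⟨(m - N.I t).filter (· ∉ N.Z t) + N.O t, hI, hq, m - N.I t, _,
    tsub_add_cancel_of_le hI, ?_, ?_, rfl⟩
  · intro s hs h
    exact (Multiset.mem_filter.1 h).2 hs
  · intro s hs
    rw [Multiset.count_filter, if_pos hs]

theorem FireSeq.snoc {N : PNRI S T} {w : List T} {t : T} {m m1 m' : Multiset S}
    (h : N.FireSeq w m m1) (ht : N.Fire t m1 m') : N.FireSeq (w ++ [t]) m m' := by
  induction h with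
  | nil m => exact .cons ht (.nil _)
  | cons h _ ih => exact .cons h (ih ht)

end PNRI

namespace CM2

variable {L : Type}

/-! ### The simulating net -/

/-- Places of the simulating net: one per location, one per counter, a place accounting for
the sum of the counters, and the place to be covered. -/
inductive Place (L : Type)
  | loc (l : L) : Place L
  | ctr (j : Fin 2) : Place L
  | sum : Place L
  | goal : Place L

noncomputable instance : DecidableEq (Place L) := Classical.decEq _

instance [Finite L] : Finite (Place L) :=
  Finite.of_surjective
    (fun x : L ⊕ Fin 2 ⊕ Bool => match x with
      | .inl l => Place.loc l
      | .inr (.inl j) => .ctr j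
      | .inr (.inr true) => .sum
      | .inr (.inr false) => .goal) (by
    rintro (l | j | _ | _)
    exacts [⟨.inl l, rfl⟩, ⟨.inr (.inl j), rfl⟩, ⟨.inr (.inr true), rfl⟩,
      ⟨.inr (.inr false), rfl⟩])

/-- The net simulating `C`. The transition `none` moves the token from `lf` to `goal` and carries
the inhibitor arc from `sum`. The transitions `some (l, b)` execute the instruction at `l`; the
Boolean `b` guesses whether a tested counter is zero, and is irrelevant for the other two
instructions. The guess "zero" resets the counter. -/
def simNet (C : CM2 L) (lf : L) : PNRI (Place L) (Option (L × Bool)) where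
  I
    | none => {.loc lf}
    | some (l, b) => match C.instr l with
      | .inc _ _ => {.loc l}
      | .dec j _ => {.loc l, .ctr j, .sum}
      | .zerotest j _ _ => if b then {.loc l} else {.loc l, .ctr j}
  O
    | none => {.goal}
    | some (l, b) => match C.instr l with
      | .inc j l' => {.loc l', .ctr j, .sum}
      | .dec _ l' => {.loc l'}
      | .zerotest j l' l'' => if b then {.loc l'} else {.loc l'', .ctr j}
  Z
    | none => ∅
    | some (l, b) => match C.instr l with
      | .zerotest j _ _ => if b then {.ctr j} else ∅
      | _ => ∅
  inhib := (none, .sum)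

/-- Every transition consumes the token of its location. -/
theorem loc_mem_I (C : CM2 L) (lf l : L) (b : Bool) :
    .loc l ∈ (simNet C lf).I (some (l, b)) := by
  cases hl : C.instr l <;> cases b <;> simp [simNet, hl]

variable [DecidableEq L]

/-! ### Markings encoding configurations -/

/-- The marking representing the configuration `⟨l, v⟩` with surplus `k`. -/
def encode (l : L) (v : Fin 2 → ℕ) (k : ℕ) : Multiset (Place L) :=
  {.loc l} + (.replicate (v 0) (.ctr 0) + .replicate (v 1) (.ctr 1)
    + .replicate (v 0 + v 1 + k) .sum)

theorem count_loc_encode (l l' : L) (v : Fin 2 → ℕ) (k : ℕ) :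
    (encode l v k).count (.loc l') = if l' = l then 1 else 0 := by
  simp [encode, Multiset.count_cons, Multiset.count_replicate]

theorem count_ctr_encode (l : L) (v : Fin 2 → ℕ) (k : ℕ) (j : Fin 2) :
    (encode l v k).count (.ctr j) = v j := by
  fin_cases j <;> simp [encode, Multiset.count_replicate]

theorem count_sum_encode (l : L) (v : Fin 2 → ℕ) (k : ℕ) :
    (encode l v k).count .sum = v 0 + v 1 + k := by
  simp [encode, Multiset.count_replicate]

theorem count_goal_encode (l : L) (v : Fin 2 → ℕ) (k : ℕ) :
    (encode l v k).count .goal = 0 := by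
  simp [encode, Multiset.count_replicate]

theorem sum_update (v : Fin 2 → ℕ) (j : Fin 2) (n : ℕ) :
    Function.update v j n 0 + Function.update v j n 1 + v j = v 0 + v 1 + n := by
  fin_cases j <;> simp <;> omega

theorem le_sum (v : Fin 2 → ℕ) (j : Fin 2) : v j ≤ v 0 + v 1 := by
  fin_cases j <;> simp

/-! ### Effect of the transitions on encoded configurations -/

section Fire

variable {C : CM2 L} {lf l l' l'' : L} {v : Fin 2 → ℕ} {k : ℕ} {j : Fin 2} {b : Bool}
  {m : Multiset (Place L)}

theorem fire_inc (hl : C.instr l = .inc j l')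
    (h : (simNet C lf).Fire (some (l, b)) (encode l v k) m) :
    m = encode l' (Function.update v j (v j + 1)) k := by
  have hs := sum_update v j (v j + 1)
  ext s
  rw [h.count_eq]
  rcases s with l0 | i | _ | _ <;>
    simp [simNet, hl, count_loc_encode, count_ctr_encode, count_sum_encode, count_goal_encode,
      Multiset.count_cons, Multiset.count_singleton, Function.update_apply] <;> grind

theorem fire_dec (hl : C.instr l = .dec j l') (hv : 0 < v j)
    (h : (simNet C lf).Fire (some (l, b)) (encode l v k) m) :
    m = encode l' (Function.update v j (v j - 1)) k := by
  have hs := sum_update v j (v j - 1)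
  have := le_sum v j
  ext s
  rw [h.count_eq]
  rcases s with l0 | i | _ | _ <;>
    simp [simNet, hl, count_loc_encode, count_ctr_encode, count_sum_encode, count_goal_encode,
      Multiset.count_cons, Multiset.count_singleton, Function.update_apply] <;> grind

/-- A guessed zero turns the contents of the tested counter into surplus. -/
theorem fire_zero (hl : C.instr l = .zerotest j l' l'')
    (h : (simNet C lf).Fire (some (l, true)) (encode l v k) m) :
    m = encode l' (Function.update v j 0) (k + v j) := by
  have hs := sum_update v j 0
  ext s
  rw [h.count_eq]
  rcases s with l0 | i | _ | _ <;>
    simp [simNet, hl, count_loc_encode, count_ctr_encode, count_sum_encode, count_goal_encode,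
      Multiset.count_cons, Multiset.count_singleton, Function.update_apply] <;> grind

theorem fire_pos (hl : C.instr l = .zerotest j l' l'') (hv : v j ≠ 0)
    (h : (simNet C lf).Fire (some (l, false)) (encode l v k) m) :
    m = encode l'' v k := by
  ext s
  rw [h.count_eq]
  rcases s with l0 | i | _ | _ <;>
    simp [simNet, hl, count_loc_encode, count_ctr_encode, count_sum_encode, count_goal_encode,
      Multiset.count_cons, Multiset.count_singleton] <;> grind

/-- The last transition of the net leaves exactly one token, since emptiness of `sum` forces
emptiness of both counters. -/
theorem fire_goal (h : (simNet C lf).Fire none (encode lf (fun _ => 0) 0) m) :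
    m = {.goal} := by
  ext s
  rw [h.count_eq]
  rcases s with l0 | i | _ | _ <;>
    simp [simNet, count_loc_encode, count_ctr_encode, count_sum_encode, count_goal_encode,
      Multiset.count_singleton]

/-- A step of the machine is simulated by one transition, with surplus zero throughout. -/
theorem exists_fire_of_step {v' : Fin 2 → ℕ} (h : C.Step (l, v) (l', v')) :
    ∃ t, (simNet C lf).Fire t (encode l v 0) (encode l' v' 0) := by
  have key (b : Bool) (hI : (simNet C lf).I (some (l, b)) ≤ encode l v 0) :
      ∃ m, (simNet C lf).Fire (some (l, b)) (encode l v 0) m :=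
    PNRI.exists_fire hI (by simp [simNet])
  cases h with
  | @inc _ _ j _ hl =>
    obtain ⟨m, hm⟩ := key true (by simp [simNet, hl, encode])
    exact ⟨_, fire_inc hl hm ▸ hm⟩
  | @dec _ _ j _ hl hv =>
    obtain ⟨m, hm⟩ := key true (by
      have := le_sum v j
      rw [Multiset.le_iff_count]
      rintro (l0 | i | _ | _) <;>
      simp [simNet, hl, count_loc_encode, count_ctr_encode, count_sum_encode, count_goal_encode,
        Multiset.count_cons, Multiset.count_singleton] <;> grind)
    exact ⟨_, fire_dec hl hv hm ▸ hm⟩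
  | @zerotestZero _ _ j _ _ hl hv =>
    obtain ⟨m, hm⟩ := key true (by simp [simNet, hl, encode])
    have := fire_zero hl hm
    rw [hv, ← hv, Function.update_eq_self, hv] at this
    exact ⟨_, this ▸ hm⟩
  | @zerotestPos _ _ j _ _ hl hv =>
    obtain ⟨m, hm⟩ := key false (by
      rw [Multiset.le_iff_count]
      rintro (l0 | i | _ | _) <;>
      simp [simNet, hl, count_loc_encode, count_ctr_encode, count_sum_encode, count_goal_encode,
        Multiset.count_cons, Multiset.count_singleton] <;> grind)
    exact ⟨_, fire_pos hl hv hm ▸ hm⟩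

end Fire

/-! ### From the machine to the net and back -/

/-- Every run of the machine is a run of the net. -/
theorem exists_fireSeq {C : CM2 L} (lf : L) {c : L × (Fin 2 → ℕ)} (h : C.Reachable c) :
    ∃ w, (simNet C lf).FireSeq w (encode C.l1 (fun _ => 0) 0) (encode c.1 c.2 0) := by
  induction h with
  | refl => exact ⟨[], .nil _⟩
  | tail _ hs ih =>
    obtain ⟨w, hw⟩ := ih
    obtain ⟨t, ht⟩ := exists_fire_of_step (lf := lf) hs
    exact ⟨_, hw.snoc ht⟩

/-- The invariant of the net: a marking encodes a configuration with some surplus, and this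
configuration is reachable if the surplus is zero; or the net has terminated in `goal`, and
then the target configuration is reachable. -/
def Inv (C : CM2 L) (lf : L) (m : Multiset (Place L)) : Prop :=
  (∃ l v k, m = encode l v k ∧ (k = 0 → C.Reachable (l, v))) ∨
    (m = {.goal} ∧ C.Reachable (lf, fun _ => 0))

theorem loc_mem_encode {l l' : L} {v : Fin 2 → ℕ} {k : ℕ}
    (h : Place.loc l' ∈ encode l v k) : l' = l := by
  by_contra hne
  rw [← Multiset.count_pos, count_loc_encode, if_neg hne] at h
  exact lt_irrefl _ h

theorem Inv.fire {C : CM2 L} {lf : L} {t : Option (L × Bool)} {m m' : Multiset (Place L)}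
    (hm : Inv C lf m) (h : (simNet C lf).Fire t m m') : Inv C lf m' := by
  rcases hm with ⟨l, v, k, rfl, hr⟩ | ⟨rfl, -⟩
  · rcases t with _ | ⟨l0, b⟩
    · have hmem : Place.loc lf ∈ encode l v k := Multiset.mem_of_le h.1 (by simp [simNet])
      obtain rfl := loc_mem_encode hmem
      -- The inhibitor arc forces both the counters and the surplus to vanish.
      have h0 : (encode lf v k).count .sum = 0 :=
        Multiset.count_eq_zero_of_notMem (h.2.1 _ rfl)
      rw [count_sum_encode] at h0
      obtain rfl : k = 0 := by omega
      obtain rfl : v = fun _ => 0 := by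
        funext j
        have := le_sum v j
        omega
      exact .inr ⟨fire_goal h, hr rfl⟩
    · obtain rfl := loc_mem_encode (Multiset.mem_of_le h.1 (loc_mem_I C lf l0 b))
      have hctr {j : Fin 2} (hj : .ctr j ∈ (simNet C lf).I (some (l0, b))) : 0 < v j := by
        have := Multiset.mem_of_le h.1 hj
        rwa [← Multiset.count_pos, count_ctr_encode] at this
      left
      cases hl : C.instr l0 with
      | inc j l' => exact ⟨_, _, _, fire_inc hl h, fun hk => (hr hk).tail (.inc hl)⟩
      | dec j l' =>
        have hv : 0 < v j := hctr (by simp [simNet, hl])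
        exact ⟨_, _, _, fire_dec hl hv h, fun hk => (hr hk).tail (.dec hl hv)⟩
      | zerotest j l' l'' =>
        cases b with
        | true =>
          refine ⟨_, _, _, fire_zero hl h, fun hk => ?_⟩
          have hv : v j = 0 := by omega
          have hu : Function.update v j 0 = v := by rw [← hv, Function.update_eq_self]
          rw [hu]
          exact (hr (by omega)).tail (.zerotestZero hl hv)
        | false =>
          have hv : v j ≠ 0 := (hctr (by simp [simNet, hl])).ne'
          exact ⟨_, _, _, fire_pos hl hv h, fun hk => (hr hk).tail (.zerotestPos hl hv)⟩
  · -- No transition is enabled once no location is marked.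
    exfalso
    rcases t with _ | ⟨l0, b⟩
    · have : Place.loc lf ∈ ({.goal} : Multiset (Place L)) :=
        Multiset.mem_of_le h.1 (by simp [simNet])
      simp at this
    · have := Multiset.mem_of_le h.1 (loc_mem_I C lf l0 b)
      simp at this

theorem inv_of_fireSeq {C : CM2 L} {lf : L} {w : List (Option (L × Bool))}
    {m m' : Multiset (Place L)} (h : (simNet C lf).FireSeq w m m') (hm : Inv C lf m) :
    Inv C lf m' := by
  induction h with
  | nil => exact hm
  | cons h _ ih => exact ih (hm.fire h)

theorem reachable_iff_coverable (C : CM2 L) (lf : L) :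
    C.Reachable (lf, fun _ => 0) ↔
      (simNet C lf).Coverable (encode C.l1 (fun _ => 0) 0) {.goal} := by
  constructor
  · intro h
    obtain ⟨w, hw⟩ := exists_fireSeq lf h
    obtain ⟨m, hm⟩ := PNRI.exists_fire (N := simNet C lf) (t := none)
      (m := encode lf (fun _ => 0) 0) (by simp [simNet, encode]) (by
        rintro q hq
        obtain rfl : Place.sum = q := congrArg Prod.snd hq
        rw [← Multiset.count_eq_zero, count_sum_encode])
    exact ⟨m, ⟨_, hw.snoc hm⟩, (fire_goal hm).ge⟩
  · rintro ⟨m, ⟨w, hw⟩, hle⟩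
    rcases inv_of_fireSeq hw (.inl ⟨_, _, _, rfl, fun _ => .refl⟩) with
      ⟨l, v, k, rfl, -⟩ | ⟨-, h⟩
    · have := Multiset.le_iff_count.1 hle .goal
      simp [count_goal_encode] at this
    · exact h

end CM2

/-- For every 2-counter machine `C` and location `l_f` there are a Petri net with reset
arcs and one inhibitor arc `(N, m0)` and a place `p` such that `⟨l_f, 0, 0⟩` is reachable
in `C` iff the marking `{p}` is coverable in `(N, m0)`. -/
theorem cm2_reach_iff_pnri_cover {L : Type} [Finite L] [Nonempty L]
    (C : CM2 L) (lf : L) :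
    ∃ (S T : Type) (_ : Finite S) (_ : Nonempty S) (_ : Finite T)
      (_ : DecidableEq S) (N : PNRI S T) (m0 : Multiset S) (p : S),
      C.Reachable (lf, fun _ => 0) ↔ N.Coverable m0 {p} := by
  classical
  exact ⟨CM2.Place L, Option (L × Bool), inferInstance, ⟨.goal⟩, inferInstance, inferInstance,
    CM2.simNet C lf, CM2.encode C.l1 (fun _ => 0) 0, .goal, CM2.reachable_iff_coverable C lf⟩
end
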